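/- arXiv:2004.05035 — 2 statements merged into one kernel-verified Lean document; each statement's English description precedes it below -/
import Mathlib

section
/- With the notation a_p^{(k,ℓ)}(u) = (-q)^{k-p}·((q^{-2};q^{-2})_{k-p}/(u q^{-2p};q^{-2})_{k-p})·[k choose p]_q·[ℓ choose k-p]_q and a₀^{(1,ℓ)}(u) = -q(1 - q^{-2})/(1 - u), the following recursion holds for 1 ≤ p ≤ k-1 and 1 < k ≤ ℓ: a_{p-1}^{(k-1,ℓ)}(u q^{-2})·(q^{k-p} + ([k-p]_q/[ℓ]_q)·a₀^{(1,ℓ)}(u)) + a_p^{(k-1,ℓ)}(u q^{-2})·q^{2p-k+1}·([ℓ+p-k+1]_q/[ℓ]_q)·a₀^{(1,ℓ)}(u) = a_p^{(k,ℓ)}(u). -/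
noncomputable section

/-- The q-integer `[L]_q = (q^L - q^{-L})/(q - q⁻¹)`. -/
def qInt {K : Type*} [Field K] (q : K) (L : ℕ) : K :=
  (q ^ L - q⁻¹ ^ L) / (q - q⁻¹)

/-- The q-factorial `[L]_q! = [1]_q [2]_q ⋯ [L]_q`. -/
def qFact {K : Type*} [Field K] (q : K) (L : ℕ) : K :=
  ∏ m ∈ Finset.range L, qInt q (m + 1)

/-- The q-binomial `[L choose p]_q = [L]_q!/([L-p]_q! [p]_q!)`. -/
def qBinom {K : Type*} [Field K] (q : K) (L p : ℕ) : K :=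
  qFact q L / (qFact q (L - p) * qFact q p)

/-- The q-Pochhammer symbol `(a ; q)_p = ∏_{r=0}^{p-1} (1 - a q^r)`. -/
def qPoch {K : Type*} [Field K] (a q : K) (p : ℕ) : K :=
  ∏ r ∈ Finset.range p, (1 - a * q ^ r)

/-- The Baxterisation coefficient
`a_p^{(k,ℓ)}(u) = (-q)^{k-p} ((q⁻²;q⁻²)_{k-p}/(u q^{-2p};q⁻²)_{k-p}) [k choose p]_q [ℓ choose k-p]_q`. -/
def aCoef {K : Type*} [Field K] (q u : K) (k ℓ p : ℕ) : K :=
  (-q) ^ (k - p) *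
    (qPoch (q⁻¹ ^ 2) (q⁻¹ ^ 2) (k - p) / qPoch (u * q⁻¹ ^ (2 * p)) (q⁻¹ ^ 2) (k - p)) *
    qBinom q k p * qBinom q ℓ (k - p)

section Helpers

variable {K : Type*} [Field K]

theorem qFact_succ' (q : K) (n : ℕ) : qFact q (n + 1) = qFact q n * qInt q (n + 1) := by
  simp [qFact, Finset.prod_range_succ]

theorem qPoch_succ' (a q : K) (n : ℕ) : qPoch a q (n + 1) = qPoch a q n * (1 - a * q ^ n) := by
  simp [qPoch, Finset.prod_range_succ]

theorem qPoch_succ_left (a q : K) (n : ℕ) :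
    qPoch a q (n + 1) = (1 - a) * qPoch (a * q) q n := by
  simp only [qPoch, Finset.prod_range_succ']
  rw [mul_comm]
  congr 1
  · simp
  · refine Finset.prod_congr rfl fun r _ => ?_
    ring

theorem qFact_ne (q : K) (hI : ∀ n, qInt q (n + 1) ≠ 0) (n : ℕ) : qFact q n ≠ 0 :=
  Finset.prod_ne_zero_iff.mpr fun m _ => hI m

theorem atoms (s X D Fl Fk Fm Fp Fe Im Ip Ik Ie Il q Q R h w v : K)
    (hs : s ≠ 0) (hq : q ≠ 0) (hQ : Q ≠ 0) (hh : h ≠ 0) (hw : w ≠ 0) (hv : v ≠ 0)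
    (hD : D ≠ 0) (hFm : Fm ≠ 0) (hFp : Fp ≠ 0) (hFe : Fe ≠ 0)
    (hIm : Im ≠ 0) (hIp : Ip ≠ 0) (hIe : Ie ≠ 0) (hIl : Il ≠ 0)
    (key : Ip * (Q * w - Im * h) + R * Im * v = Ik * w) :
    (s * -q) * (X * (Im * h / Q) / (v * D)) * (Fk / (Fm * Im * Fp)) * (Fl / (Fe * (Fm * Im))) *
        (Q + Im / Il * (-h / w * Il)) +
      s * (X / D) * (Fk / (Fm * (Fp * Ip))) * (Fl / (Fe * Ie * Fm)) * (R * q / Q) *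
        (Ie / Il) * (-h / w * Il) =
    (s * -q) * (X * (Im * h / Q) / (v * D)) * (Fk * Ik / (Fm * Im * (Fp * Ip))) *
      (Fl / (Fe * (Fm * Im))) := by
  have : Ik = (Ip * (Q * w - Im * h) + R * Im * v) / w := by
    rw [key]; field_simp
  subst this
  field_simp
  ring

theorem general (q u : K) (hq : q ≠ 0) (hh : q - q⁻¹ ≠ 0) (hI : ∀ n, qInt q (n + 1) ≠ 0)
    (hu : ∀ n : ℕ, 1 - u * q⁻¹ ^ n ≠ 0) (P M e : ℕ) :
    aCoef q (u * q⁻¹ ^ 2) (P + M + 1) (P + M + 2 + e) P *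
        (q ^ (M + 1) + (qInt q (M + 1) / qInt q (P + M + 2 + e)) * aCoef q u 1 (P + M + 2 + e) 0) +
      aCoef q (u * q⁻¹ ^ 2) (P + M + 1) (P + M + 2 + e) (P + 1) * q ^ ((P : ℤ) + 1 - M) *
        (qInt q (P + 1 + e + 1) / qInt q (P + M + 2 + e)) * aCoef q u 1 (P + M + 2 + e) 0 =
      aCoef q u (P + M + 2) (P + M + 2 + e) (P + 1) := by
  have hF := qFact_ne q hI
  have hw : 1 - u ≠ 0 := by simpa using hu 0
  have hIl : qInt q (P + M + 2 + e) ≠ 0 := by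
    have := hI (P + M + 1 + e)
    rwa [show P + M + 1 + e + 1 = P + M + 2 + e by ring] at this
  have a0 : aCoef q u 1 (P + M + 2 + e) 0 =
      -(q - q⁻¹) / (1 - u) * qInt q (P + M + 2 + e) := by
    have h1 : qInt q 1 = 1 := by simp [qInt, hh]
    have h2 : qFact q (P + M + 2 + e) =
        qFact q (P + M + 1 + e) * qInt q (P + M + 2 + e) := by
      rw [show P + M + 2 + e = P + M + 1 + e + 1 by ring, qFact_succ']
    have h3 := hF (P + M + 1 + e)
    have h4 : -q * (1 - q⁻¹ ^ 2) = -(q - q⁻¹) := by field_simp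
    rw [← h4]
    simp only [aCoef, qBinom, show 1 - 0 = 1 from rfl,
      show P + M + 2 + e - 1 = P + M + 1 + e by omega, h2]
    simp [qPoch, qFact, h1] at h3 ⊢
    field_simp
  have hz : q ^ ((P : ℤ) + 1 - M) = q ^ (P + 1) * q / q ^ (M + 1) := by
    rw [zpow_sub₀ hq, pow_succ q M, mul_div_mul_right _ _ hq]
    norm_cast
  have hx : 1 - q⁻¹ ^ 2 * (q⁻¹ ^ 2) ^ M = qInt q (M + 1) * (q - q⁻¹) / q ^ (M + 1) := by
    rw [qInt, div_mul_cancel₀ _ hh, sub_div, div_self (pow_ne_zero _ hq), div_eq_mul_inv,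
      ← inv_pow q (M + 1)]
    ring
  have key : qInt q (P + 1) * (q ^ (M + 1) * (1 - u) - qInt q (M + 1) * (q - q⁻¹)) +
      q ^ (P + 1) * qInt q (M + 1) * (1 - u * q⁻¹ ^ (2 * (P + 1))) =
      qInt q (P + M + 1 + 1) * (1 - u) := by
    simp only [qInt, inv_pow]
    rw [div_mul_cancel₀ _ hh]
    rw [show 2 * (P + 1) = (P + 1) + (P + 1) by ring,
      show P + M + 1 + 1 = (P + 1) + (M + 1) by ring]
    simp only [pow_add q (P + 1)]
    have hA : q ^ (P + 1) ≠ 0 := pow_ne_zero _ hq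
    have hB : q ^ (M + 1) ≠ 0 := pow_ne_zero _ hq
    generalize q ^ (P + 1) = A at *
    generalize q ^ (M + 1) = B at *
    generalize q - q⁻¹ = h at *
    field_simp
    ring
  have hD : qPoch (u * q⁻¹ ^ (2 * (P + 1)) * q⁻¹ ^ 2) (q⁻¹ ^ 2) M ≠ 0 := by
    refine Finset.prod_ne_zero_iff.mpr fun r _ => ?_
    convert hu (2 * (P + 1) + 2 + 2 * r) using 2
    ring
  have := atoms ((-q) ^ M) (qPoch (q⁻¹ ^ 2) (q⁻¹ ^ 2) M)
    (qPoch (u * q⁻¹ ^ (2 * (P + 1)) * q⁻¹ ^ 2) (q⁻¹ ^ 2) M)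
    (qFact q (P + M + 2 + e)) (qFact q (P + M + 1)) (qFact q M) (qFact q P)
    (qFact q (P + 1 + e)) (qInt q (M + 1)) (qInt q (P + 1)) (qInt q (P + M + 1 + 1))
    (qInt q (P + 1 + e + 1)) (qInt q (P + M + 2 + e)) q (q ^ (M + 1)) (q ^ (P + 1))
    (q - q⁻¹) (1 - u) (1 - u * q⁻¹ ^ (2 * (P + 1)))
    (pow_ne_zero _ (neg_ne_zero.mpr hq)) hq (pow_ne_zero _ hq) hh hw (hu _) hD
    (hF _) (hF _) (hF _) (hI _) (hI _) (hI _) hIl key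
  rw [a0, hz]
  simp only [aCoef, qBinom]
  rw [show P + M + 1 - P = M + 1 by omega, show P + M + 1 - (P + 1) = M by omega,
    show P + M + 2 - (P + 1) = M + 1 by omega,
    show P + M + 2 + e - (M + 1) = P + 1 + e by omega,
    show P + M + 2 + e - M = P + 1 + e + 1 by omega,
    show u * q⁻¹ ^ 2 * q⁻¹ ^ (2 * P) = u * q⁻¹ ^ (2 * (P + 1)) by ring,
    show u * q⁻¹ ^ 2 * q⁻¹ ^ (2 * (P + 1)) = u * q⁻¹ ^ (2 * (P + 1)) * q⁻¹ ^ 2 by ring,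
    qPoch_succ_left (u * q⁻¹ ^ (2 * (P + 1))), qPoch_succ', hx,
    qFact_succ' q M, qFact_succ' q P, qFact_succ' q (P + 1 + e),
    show qFact q (P + M + 2) = qFact q (P + M + 1) * qInt q (P + M + 1 + 1) from
      qFact_succ' q (P + M + 1), pow_succ (-q) M]
  exact this

end Helpers

theorem X_pow_ne (n : ℕ) : (RatFunc.X : RatFunc ℚ) ^ (n + 1) ≠ 1 := by
  intro h
  rw [← RatFunc.algebraMap_X, ← map_pow, ← map_one (algebraMap (Polynomial ℚ) (RatFunc ℚ))] at h
  have h2 := RatFunc.algebraMap_injective ℚ h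
  have h3 := congrArg Polynomial.natDegree h2
  simp at h3

theorem one_sub_X_mul_C_ne (c : RatFunc ℚ) :
    (1 : RatFunc (RatFunc ℚ)) - RatFunc.X * RatFunc.C c ≠ 0 := by
  intro h
  rw [← RatFunc.algebraMap_X, ← RatFunc.algebraMap_C, ← map_mul,
    ← map_one (algebraMap (Polynomial (RatFunc ℚ)) (RatFunc (RatFunc ℚ))), ← map_sub,
    ← map_zero (algebraMap (Polynomial (RatFunc ℚ)) (RatFunc (RatFunc ℚ)))] at h
  have h2 := RatFunc.algebraMap_injective _ h
  have h3 := congrArg (Polynomial.eval 0) h2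
  simp at h3

/-- Middle coefficient recursion in the proof of the generalized Baxterisation lemma:
for `1 ≤ p ≤ k-1` and `1 < k ≤ ℓ`,
`a_{p-1}^{(k-1,ℓ)}(uq⁻²)(q^{k-p} + ([k-p]_q/[ℓ]_q) a₀^{(1,ℓ)}(u))
  + a_p^{(k-1,ℓ)}(uq⁻²) q^{2p-k+1} ([ℓ+p-k+1]_q/[ℓ]_q) a₀^{(1,ℓ)}(u) = a_p^{(k,ℓ)}(u)`,
as an identity of rational functions in `u` over `ℚ(q)`. -/
theorem aCoef_middle_recursion (k ℓ p : ℕ) (hp : 1 ≤ p) (hpk : p ≤ k - 1)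
    (hk : 1 < k) (hkℓ : k ≤ ℓ) :
    let q : RatFunc (RatFunc ℚ) := RatFunc.C RatFunc.X
    let u : RatFunc (RatFunc ℚ) := RatFunc.X
    aCoef q (u * q⁻¹ ^ 2) (k - 1) ℓ (p - 1) *
        (q ^ (k - p) + (qInt q (k - p) / qInt q ℓ) * aCoef q u 1 ℓ 0) +
      aCoef q (u * q⁻¹ ^ 2) (k - 1) ℓ p * q ^ (2 * (p : ℤ) - k + 1) *
        (qInt q (ℓ + p + 1 - k) / qInt q ℓ) * aCoef q u 1 ℓ 0 =
      aCoef q u k ℓ p := by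
  intro q u
  have hq : q ≠ 0 := by
    simp [q, RatFunc.X_ne_zero]
  have hpow : ∀ n : ℕ, q ^ (n + 1) ≠ 1 := by
    intro n h
    refine X_pow_ne n (RatFunc.C_injective ?_)
    simpa [q] using h
  have hd : ∀ n : ℕ, q ^ (n + 1) - q⁻¹ ^ (n + 1) ≠ 0 := by
    intro n h
    refine hpow (2 * n + 1) ?_
    have hA : q ^ (n + 1) ≠ 0 := pow_ne_zero _ hq
    rw [inv_pow, sub_eq_zero] at h
    calc q ^ (2 * n + 1 + 1) = q ^ (n + 1) * q ^ (n + 1) := by ring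
      _ = (q ^ (n + 1))⁻¹ * q ^ (n + 1) := by rw [← h]
      _ = 1 := inv_mul_cancel₀ hA
  have hh : q - q⁻¹ ≠ 0 := by simpa using hd 0
  have hI : ∀ n, qInt q (n + 1) ≠ 0 := fun n => div_ne_zero (hd n) hh
  have hu : ∀ n : ℕ, 1 - u * q⁻¹ ^ n ≠ 0 := by
    intro n
    have := one_sub_X_mul_C_ne ((RatFunc.X : RatFunc ℚ)⁻¹ ^ n)
    simpa only [map_pow, map_inv₀] using this
  clear_value q u
  obtain ⟨P, rfl⟩ : ∃ P, p = P + 1 := ⟨p - 1, by omega⟩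
  obtain ⟨M, rfl⟩ : ∃ M, k = P + M + 2 := ⟨k - P - 2, by omega⟩
  obtain ⟨e, rfl⟩ : ∃ e, ℓ = P + M + 2 + e := ⟨ℓ - (P + M + 2), by omega⟩
  have := general q u hq hh hI hu P M e
  rw [show P + M + 2 - 1 = P + M + 1 by omega, show P + 1 - 1 = P by omega,
    show P + M + 2 - (P + 1) = M + 1 by omega,
    show P + M + 2 + e + (P + 1) + 1 - (P + M + 2) = P + 1 + e + 1 by omega,
    show 2 * ((P + 1 : ℕ) : ℤ) - ((P + M + 2 : ℕ) : ℤ) + 1 = (P : ℤ) + 1 - M by push_cast; ring]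
  exact this
end
end

section
/- Let V = ℂ^N with the standard Hecke R-matrix Ř as above, and define Ř(u) := Ř - ((q-q⁻¹)/(1-u))·Id ∈ End(V⊗V). Then the braided Yang–Baxter equation with multiplicative spectral parameters holds in End(V⊗V⊗V): (Ř(u)⊗Id)(Id⊗Ř(uv))(Ř(v)⊗Id) = (Id⊗Ř(v))(Ř(uv)⊗Id)(Id⊗Ř(u)) for all u, v ∈ ℂ with u, v, uv ≠ 1. -/
open TensorProduct

/-- Baxterisation of two Hecke generators satisfying the braid relation. -/
theorem baxterise_aux {M : Type*} [AddCommGroup M] [Module ℂ M] (A B : M →ₗ[ℂ] M) (l a b c : ℂ)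
    (hA : ∀ x, A (A x) = l • A x + x) (hB : ∀ x, B (B x) = l • B x + x)
    (hAB : ∀ x, A (B (A x)) = B (A (B x))) (habc : c * (a + b - l) = a * b) (x : M) :
    (A - a • (LinearMap.id : M →ₗ[ℂ] M)) ((B - c • (LinearMap.id : M →ₗ[ℂ] M)) ((A - b • (LinearMap.id : M →ₗ[ℂ] M)) x)) =
    (B - b • (LinearMap.id : M →ₗ[ℂ] M)) ((A - c • (LinearMap.id : M →ₗ[ℂ] M)) ((B - a • (LinearMap.id : M →ₗ[ℂ] M)) x)) := by
  simp only [LinearMap.sub_apply, LinearMap.smul_apply, LinearMap.id_apply, map_sub, map_smul,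
    hA, hB, hAB]
  linear_combination (norm := module) habc • (A x - B x)

/-- Hecke and braid relations checked on a family of vectors. -/
theorem hecke_aux {N : ℕ} {M : Type*} [AddCommGroup M] [Module ℂ M] (A B : M →ₗ[ℂ] M)
    (E : Fin N → Fin N → Fin N → M) (q l : ℂ) (hql : q * q = l * q + 1)
    (hA : ∀ i j k, A (E i j k) = if i = j then q • E i j k else if i < j then
      E j i k + l • E i j k else E j i k)
    (hB : ∀ i j k, B (E i j k) = if j = k then q • E i j k else if j < k then
      E i k j + l • E i j k else E i k j) (i j k : Fin N) :
    A (A (E i j k)) = l • A (E i j k) + E i j k ∧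
    B (B (E i j k)) = l • B (E i j k) + E i j k ∧
    A (B (A (E i j k))) = B (A (B (E i j k))) := by
  have hA0 : ∀ i k, A (E i i k) = q • E i i k := fun i k => by simp [hA]
  have hA1 : ∀ i j k, i < j → A (E i j k) = E j i k + l • E i j k :=
    fun i j k h => by simp [hA, h, h.ne]
  have hA2 : ∀ i j k, j < i → A (E i j k) = E j i k :=
    fun i j k h => by simp [hA, h.not_gt, h.ne']
  have hB0 : ∀ i k, B (E i k k) = q • E i k k := fun i k => by simp [hB]
  have hB1 : ∀ i j k, j < k → B (E i j k) = E i k j + l • E i j k :=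
    fun i j k h => by simp [hB, h, h.ne]
  have hB2 : ∀ i j k, k < j → B (E i j k) = E i k j :=
    fun i j k h => by simp [hB, h.not_gt, h.ne']
  clear hA hB
  have hq2 : ∀ x : M, q • q • x = l • q • x + x := fun x => by
    rw [smul_smul, hql]; module
  have hq3 : ∀ x : M, q • l • x = l • q • x := fun x => smul_comm _ _ _
  refine ⟨?_, ?_, ?_⟩
  · rcases lt_trichotomy i j with h | rfl | h
    · simp only [hA1 _ _ _ h, hA2 _ _ _ h, map_add, map_smul]; module
    · simp only [hA0, map_smul, smul_smul, hql]; module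
    · simp only [hA1 _ _ _ h, hA2 _ _ _ h, map_add, map_smul]; module
  · rcases lt_trichotomy j k with h | rfl | h
    · simp only [hB1 _ _ _ h, hB2 _ _ _ h, map_add, map_smul]; module
    · simp only [hB0, map_smul, smul_smul, hql]; module
    · simp only [hB1 _ _ _ h, hB2 _ _ _ h, map_add, map_smul]; module
  · rcases lt_trichotomy i j with h | h | h <;> rcases lt_trichotomy j k with h' | h' | h' <;>
      rcases lt_trichotomy i k with h'' | h'' | h'' <;> (try (exfalso; omega)) <;>
      (try subst h) <;> (try subst h') <;> (try subst h'') <;>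
      simp only [*, map_add, map_smul, smul_add] <;>
      module

/-- The generic version over a space with a basis. -/
theorem baxter_generic {N : ℕ} {V : Type*} [AddCommGroup V] [Module ℂ V]
    (e : Module.Basis (Fin N) ℂ V) (q : ℂ) (hq : q ≠ 0)
    (R : (V ⊗[ℂ] V) →ₗ[ℂ] (V ⊗[ℂ] V))
    (hR' : ∀ i j, R (e i ⊗ₜ e j) = if i = j then q • (e i ⊗ₜ e j) else if i < j then
      e j ⊗ₜ e i + (q - q⁻¹) • (e i ⊗ₜ e j) else e j ⊗ₜ e i)
    (u v : ℂ) (hu : u ≠ 1) (hv : v ≠ 1) (huv : u * v ≠ 1) :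
    let Rbax : ℂ → ((V ⊗[ℂ] V) →ₗ[ℂ] (V ⊗[ℂ] V)) :=
      fun w => R - ((q - q⁻¹) / (1 - w)) • LinearMap.id
    let α := TensorProduct.assoc ℂ V V V
    let T₁ : ℂ → (((V ⊗[ℂ] V) ⊗[ℂ] V) →ₗ[ℂ] ((V ⊗[ℂ] V) ⊗[ℂ] V)) :=
      fun w => LinearMap.rTensor V (Rbax w)
    let T₂ : ℂ → (((V ⊗[ℂ] V) ⊗[ℂ] V) →ₗ[ℂ] ((V ⊗[ℂ] V) ⊗[ℂ] V)) :=
      fun w => α.symm.toLinearMap ∘ₗ LinearMap.lTensor V (Rbax w) ∘ₗ α.toLinearMap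
    T₁ u ∘ₗ T₂ (u * v) ∘ₗ T₁ v = T₂ v ∘ₗ T₁ (u * v) ∘ₗ T₂ u := by
  intro Rbax α T₁ T₂
  let A : ((V ⊗[ℂ] V) ⊗[ℂ] V) →ₗ[ℂ] ((V ⊗[ℂ] V) ⊗[ℂ] V) := LinearMap.rTensor V R
  let B : ((V ⊗[ℂ] V) ⊗[ℂ] V) →ₗ[ℂ] ((V ⊗[ℂ] V) ⊗[ℂ] V) :=
    α.symm.toLinearMap ∘ₗ LinearMap.lTensor V R ∘ₗ α.toLinearMap
  have hT1 : ∀ w, T₁ w = A - ((q - q⁻¹) / (1 - w)) •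
      (LinearMap.id : ((V ⊗[ℂ] V) ⊗[ℂ] V) →ₗ[ℂ] ((V ⊗[ℂ] V) ⊗[ℂ] V)) := by
    intro w
    simp only [T₁, Rbax, A, LinearMap.rTensor_sub, LinearMap.rTensor_smul, LinearMap.rTensor_id]
  have hT2 : ∀ w, T₂ w = B - ((q - q⁻¹) / (1 - w)) • (LinearMap.id : ((V ⊗[ℂ] V) ⊗[ℂ] V) →ₗ[ℂ] ((V ⊗[ℂ] V) ⊗[ℂ] V)) := by
    intro w
    refine LinearMap.ext fun x => ?_
    simp [T₂, Rbax, B, LinearMap.lTensor_sub, LinearMap.lTensor_smul]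
  let E : Fin N → Fin N → Fin N → (V ⊗[ℂ] V) ⊗[ℂ] V := fun i j k => (e i ⊗ₜ e j) ⊗ₜ e k
  have hA : ∀ i j k, A (E i j k) = if i = j then q • E i j k else if i < j then
      E j i k + (q - q⁻¹) • E i j k else E j i k := by
    intro i j k
    simp only [A, E, LinearMap.rTensor_tmul, hR']
    split_ifs <;> simp only [TensorProduct.add_tmul, TensorProduct.smul_tmul']
  have hB : ∀ i j k, B (E i j k) = if j = k then q • E i j k else if j < k then
      E i k j + (q - q⁻¹) • E i j k else E i k j := by
    intro i j k
    simp only [B, E, α, LinearMap.comp_apply, LinearEquiv.coe_coe, TensorProduct.assoc_tmul,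
      LinearMap.lTensor_tmul, hR']
    split_ifs <;> simp only [TensorProduct.tmul_add, TensorProduct.tmul_smul, map_add, map_smul,
      TensorProduct.assoc_symm_tmul]
  have key := hecke_aux A B E q (q - q⁻¹) (by field_simp; ring) hA hB
  let bs := (e.tensorProduct e).tensorProduct e
  have hbs : ∀ i j k, bs ((i, j), k) = E i j k := by
    intro i j k
    simp [bs, E, Module.Basis.tensorProduct_apply]
  have h1 : A ∘ₗ A = (q - q⁻¹) • A + LinearMap.id := by
    refine bs.ext ?_
    rintro ⟨⟨i, j⟩, k⟩
    rw [hbs]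
    exact (key i j k).1
  have h2 : B ∘ₗ B = (q - q⁻¹) • B + LinearMap.id := by
    refine bs.ext ?_
    rintro ⟨⟨i, j⟩, k⟩
    rw [hbs]
    exact (key i j k).2.1
  have h3 : A ∘ₗ B ∘ₗ A = B ∘ₗ A ∘ₗ B := by
    refine bs.ext ?_
    rintro ⟨⟨i, j⟩, k⟩
    rw [hbs]
    exact (key i j k).2.2
  rw [hT1, hT1, hT1, hT2, hT2, hT2]
  refine LinearMap.ext fun x => ?_
  refine baxterise_aux A B (q - q⁻¹) _ _ _ (fun x => LinearMap.congr_fun h1 x)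
    (fun x => LinearMap.congr_fun h2 x) (fun x => LinearMap.congr_fun h3 x) ?_ x
  have hu' : 1 - u ≠ 0 := sub_ne_zero.2 hu.symm
  have hv' : 1 - v ≠ 0 := sub_ne_zero.2 hv.symm
  have huv' : 1 - u * v ≠ 0 := sub_ne_zero.2 huv.symm
  generalize q - q⁻¹ = l
  field_simp
  ring

/-- The Baxterised matrix solution: with `Ř` the standard Hecke R-matrix on
`ℂ^N ⊗ ℂ^N` and `Ř(u) = Ř - ((q-q⁻¹)/(1-u))·Id`, the braided Yang--Baxter equation
with multiplicative spectral parameters holds on `V⊗V⊗V`. -/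
theorem baxterised_hecke_R_matrix_YBE (N : ℕ) (hN : 0 < N) (q : ℂ) (hq : q ≠ 0)
    (R : ((Fin N → ℂ) ⊗[ℂ] (Fin N → ℂ)) →ₗ[ℂ] ((Fin N → ℂ) ⊗[ℂ] (Fin N → ℂ)))
    (hR : ∀ i j : Fin N,
      R ((Pi.single i 1 : Fin N → ℂ) ⊗ₜ[ℂ] (Pi.single j 1 : Fin N → ℂ)) =
        if i = j then
          q • ((Pi.single i 1 : Fin N → ℂ) ⊗ₜ[ℂ] (Pi.single j 1 : Fin N → ℂ))
        else if i < j then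
          (Pi.single j 1 : Fin N → ℂ) ⊗ₜ[ℂ] (Pi.single i 1 : Fin N → ℂ) +
            (q - q⁻¹) • ((Pi.single i 1 : Fin N → ℂ) ⊗ₜ[ℂ] (Pi.single j 1 : Fin N → ℂ))
        else (Pi.single j 1 : Fin N → ℂ) ⊗ₜ[ℂ] (Pi.single i 1 : Fin N → ℂ))
    (u v : ℂ) (hu : u ≠ 1) (hv : v ≠ 1) (huv : u * v ≠ 1) :
    let V := Fin N → ℂ
    let Rbax : ℂ → ((V ⊗[ℂ] V) →ₗ[ℂ] (V ⊗[ℂ] V)) :=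
      fun w => R - ((q - q⁻¹) / (1 - w)) • LinearMap.id
    let α := TensorProduct.assoc ℂ V V V
    let T₁ : ℂ → (((V ⊗[ℂ] V) ⊗[ℂ] V) →ₗ[ℂ] ((V ⊗[ℂ] V) ⊗[ℂ] V)) :=
      fun w => LinearMap.rTensor V (Rbax w)
    let T₂ : ℂ → (((V ⊗[ℂ] V) ⊗[ℂ] V) →ₗ[ℂ] ((V ⊗[ℂ] V) ⊗[ℂ] V)) :=
      fun w => α.symm.toLinearMap ∘ₗ LinearMap.lTensor V (Rbax w) ∘ₗ α.toLinearMap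
    T₁ u ∘ₗ T₂ (u * v) ∘ₗ T₁ v = T₂ v ∘ₗ T₁ (u * v) ∘ₗ T₂ u := by
  exact baxter_generic (Pi.basisFun ℂ (Fin N)) q hq R
    (fun i j => by simpa only [Pi.basisFun_apply] using hR i j) u v hu hv huv
end
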